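/- Let (W, r_1, …, r_n) be a Strip Packing instance whose rectangles are listed in the FQW-ordering with Q ≠ ∅, and consider its BL packing. Let k ≥ 1. Every line ℓ ∈ L^k that intersects the rectangle LM^k has occupied fraction at least k/(2k+1), and every line ℓ ∈ L^k that does not intersect LM^k has occupied fraction at least 1/2. -/

import Mathlib

open scoped Classical
open MeasureTheory

/-- An axis-parallel rectangle, given by its width and its height. -/
structure Rect where
  w : ℝ
  h : ℝ

/-- A Strip Packing instance: a strip of width `W > 0` and `n` rectangles
`r 0, …, r (n-1)`, each with positive height and width at most `W`. -/
structure SPInstance (n : ℕ) where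
  W : ℝ
  r : Fin n → Rect
  W_pos : 0 < W
  w_pos : ∀ i, 0 < (r i).w
  w_le_W : ∀ i, (r i).w ≤ W
  h_pos : ∀ i, 0 < (r i).h

/-- The open box of rectangle `R` placed at position `p`. -/
def openBox (R : Rect) (p : ℝ × ℝ) : Set (ℝ × ℝ) :=
  Set.Ioo p.1 (p.1 + R.w) ×ˢ Set.Ioo p.2 (p.2 + R.h)

/-- The closed box of rectangle `R` placed at position `p`. -/
def closedBox (R : Rect) (p : ℝ × ℝ) : Set (ℝ × ℝ) :=
  Set.Icc p.1 (p.1 + R.w) ×ˢ Set.Icc p.2 (p.2 + R.h)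

namespace SPInstance

variable {n : ℕ}

/-- Rectangle `i` placed at `p` lies inside the strip. -/
def InStrip (I : SPInstance n) (i : Fin n) (p : ℝ × ℝ) : Prop :=
  0 ≤ p.1 ∧ p.1 + (I.r i).w ≤ I.W ∧ 0 ≤ p.2

/-- `pos` is a feasible packing: each rectangle lies in the strip and the open
boxes are pairwise disjoint. -/
def Feasible (I : SPInstance n) (pos : Fin n → ℝ × ℝ) : Prop :=
  (∀ i, I.InStrip i (pos i)) ∧
    Pairwise (fun i j : Fin n =>
      Disjoint (openBox (I.r i) (pos i)) (openBox (I.r j) (pos j)))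

/-- The height of a packing, `max_i (y_i + h_i)`. -/
noncomputable def height (I : SPInstance n) (pos : Fin n → ℝ × ℝ) : ℝ :=
  ⨆ i, ((pos i).2 + (I.r i).h)

/-- The minimum height of a feasible packing. -/
noncomputable def hOPT (I : SPInstance n) : ℝ :=
  sInf {H | ∃ pos, I.Feasible pos ∧ I.height pos = H}

/-- The maximum height of a rectangle of the instance. -/
noncomputable def hmax (I : SPInstance n) : ℝ :=
  ⨆ i, (I.r i).h

/-- Rectangle `i` can feasibly be placed at `p`, given the rectangles
`j < i` already placed at `pos j`. -/
def FeasibleAt (I : SPInstance n) (pos : Fin n → ℝ × ℝ) (i : Fin n) (p : ℝ × ℝ) : Prop :=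
  I.InStrip i p ∧ ∀ j : Fin n, j < i →
    Disjoint (openBox (I.r i) p) (openBox (I.r j) (pos j))

/-- `pos` is the Bottom-Left packing for the ordering `r 0, r 1, …`: every
rectangle is feasibly placed, at the lexicographically minimal `(y, x)`. -/
def IsBL (I : SPInstance n) (pos : Fin n → ℝ × ℝ) : Prop :=
  ∀ i : Fin n, I.FeasibleAt pos i (pos i) ∧
    ∀ p : ℝ × ℝ, I.FeasibleAt pos i p →
      (pos i).2 < p.2 ∨ ((pos i).2 = p.2 ∧ (pos i).1 ≤ p.1)

/-- Greedy construction of the set `F` of the FQW-partition, processing the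
rectangles in the order `σ 0, σ 1, …` and adding a rectangle whenever the
total width of `F` stays at most `W`. -/
noncomputable def greedyF (I : SPInstance n) (σ : Equiv.Perm (Fin n)) : Finset (Fin n) :=
  (List.finRange n).foldl
    (fun F k =>
      if (I.r (σ k)).w + ∑ f ∈ F, (I.r f).w ≤ I.W then insert (σ k) F else F) ∅

end SPInstance

/-- An FQW-partition datum: a processing order `σ` of the rectangles that is
sorted by decreasing height. -/
structure FQW {n : ℕ} (I : SPInstance n) where
  σ : Equiv.Perm (Fin n)
  sorted : ∀ k k' : Fin n, k ≤ k' → (I.r (σ k')).h ≤ (I.r (σ k)).h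

namespace FQW

variable {n : ℕ} {I : SPInstance n}

/-- The set `F` of the FQW-partition. -/
noncomputable def F (d : FQW I) : Finset (Fin n) := I.greedyF d.σ

/-- The set `𝒲` of the FQW-partition: rectangles not in `F` of width
greater than `W/2`. -/
noncomputable def Wset (d : FQW I) : Finset (Fin n) :=
  Finset.univ.filter fun i => i ∉ d.F ∧ I.W / 2 < (I.r i).w

/-- The set `Q` of the FQW-partition: all remaining rectangles. -/
noncomputable def Q (d : FQW I) : Finset (Fin n) :=
  Finset.univ.filter fun i => i ∉ d.F ∧ ¬ I.W / 2 < (I.r i).w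

/-- The rectangles of the instance are listed in the FQW-ordering: first `F`
sorted by decreasing height, then `Q` sorted by decreasing width, then `𝒲`. -/
def IsOrdered (d : FQW I) : Prop :=
  (∀ i : Fin n, i ∈ d.F ↔ (i : ℕ) < d.F.card) ∧
  (∀ i : Fin n, i ∈ d.Q ↔ d.F.card ≤ (i : ℕ) ∧ (i : ℕ) < d.F.card + d.Q.card) ∧
  (∀ i j : Fin n, (i : ℕ) ≤ (j : ℕ) → (j : ℕ) < d.F.card → (I.r j).h ≤ (I.r i).h) ∧
  (∀ i j : Fin n, d.F.card ≤ (i : ℕ) → (i : ℕ) ≤ (j : ℕ) →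
    (j : ℕ) < d.F.card + d.Q.card → (I.r j).w ≤ (I.r i).w)

end FQW

/-- `max {y_{r_1}, …, y_{r_i}}` (the first `i` rectangles, `0` if `i = 0`):
the lower boundary of the region `H_{i+1}` of the horizontal strip partition. -/
noncomputable def maxYBelow {n : ℕ} (pos : Fin n → ℝ × ℝ) (i : ℕ) : ℝ :=
  ⨆ j : {j : Fin n // (j : ℕ) < i}, (pos (j : Fin n)).2

namespace SPInstance

variable {n : ℕ}

/-- The horizontal line at height `t` is proper: it meets no top or
bottom face of a rectangle. -/
def ProperLine (I : SPInstance n) (pos : Fin n → ℝ × ℝ) (t : ℝ) : Prop :=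
  ∀ j : Fin n, t ≠ (pos j).2 ∧ t ≠ (pos j).2 + (I.r j).h

/-- Rectangle `j` intersects the horizontal line at height `t`. -/
def Intersects (I : SPInstance n) (pos : Fin n → ℝ × ℝ) (j : Fin n) (t : ℝ) : Prop :=
  (pos j).2 < t ∧ t < (pos j).2 + (I.r j).h

/-- The occupied part of the horizontal line at height `t`. -/
noncomputable def occupied (I : SPInstance n) (pos : Fin n → ℝ × ℝ) (t : ℝ) : Set ℝ :=
  ⋃ j ∈ {j : Fin n | I.Intersects pos j t}, Set.Icc (pos j).1 ((pos j).1 + (I.r j).w)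

/-- The occupied fraction of the horizontal line at height `t`. -/
noncomputable def occFrac (I : SPInstance n) (pos : Fin n → ℝ × ℝ) (t : ℝ) : ℝ :=
  (volume (I.occupied pos t)).toReal / I.W

/-- The region `H_{i+1}` (for the `0`-based index `i`) of the horizontal strip
partition: `[0, W] × [max {y_{r_1}, …, y_{r_i}}, y_{r_{i+1}})`. -/
def regionH (I : SPInstance n) (pos : Fin n → ℝ × ℝ) (i : Fin n) : Set (ℝ × ℝ) :=
  Set.Icc 0 I.W ×ˢ Set.Ico (maxYBelow pos (i : ℕ)) (pos i).2

/-- `G` is an unoccupied gap of the horizontal line at height `t`: a maximal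
subinterval of `[0, W]` disjoint from the occupied part of the line. -/
def IsGap (I : SPInstance n) (pos : Fin n → ℝ × ℝ) (t : ℝ) (G : Set ℝ) : Prop :=
  G.Nonempty ∧ G ⊆ Set.Icc 0 I.W ∧ G.OrdConnected ∧ Disjoint G (I.occupied pos t) ∧
    ∀ G' : Set ℝ, G'.OrdConnected → G' ⊆ Set.Icc 0 I.W →
      Disjoint G' (I.occupied pos t) → G ⊆ G' → G' = G

/-- `j` is a left supporter of `i`: it comes before `i` in the ordering, its
right face touches the left face of `i`, and their open `y`-ranges intersect. -/
def IsLeftSupporter (I : SPInstance n) (pos : Fin n → ℝ × ℝ) (i j : Fin n) : Prop :=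
  j < i ∧ (pos j).1 + (I.r j).w = (pos i).1 ∧
    (pos j).2 < (pos i).2 + (I.r i).h ∧ (pos i).2 < (pos j).2 + (I.r j).h

/-- `j` is a bottom supporter of `i`: it comes before `i` in the ordering, its
top face touches the bottom face of `i`, and their open `x`-ranges intersect. -/
def IsBottomSupporter (I : SPInstance n) (pos : Fin n → ℝ × ℝ) (i j : Fin n) : Prop :=
  j < i ∧ (pos j).2 + (I.r j).h = (pos i).2 ∧
    (pos j).1 < (pos i).1 + (I.r i).w ∧ (pos i).1 < (pos j).1 + (I.r j).w

/-- `j` is the leftmost bottom supporter of `i`. -/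
def IsLeftmostBottomSupporter (I : SPInstance n) (pos : Fin n → ℝ × ℝ)
    (i j : Fin n) : Prop :=
  I.IsBottomSupporter pos i j ∧
    ∀ j' : Fin n, I.IsBottomSupporter pos i j' → (pos j).1 ≤ (pos j').1

end SPInstance

/-- `iT` is the top rectangle `r_T` of `Q`: the rectangle of `Q` whose top face
is highest, ties broken by highest bottom face. -/
def IsTopRect {n : ℕ} (I : SPInstance n) (d : FQW I) (pos : Fin n → ℝ × ℝ)
    (iT : Fin n) : Prop :=
  iT ∈ d.Q ∧ ∀ j ∈ d.Q,
    (pos j).2 + (I.r j).h < (pos iT).2 + (I.r iT).h ∨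
    ((pos j).2 + (I.r j).h = (pos iT).2 + (I.r iT).h ∧ (pos j).2 ≤ (pos iT).2)

/-- `iL` is the left rectangle `r_L` of `Q`: the first rectangle of `Q` in the
ordering touching the left strip boundary, and `r_T` if there is none. -/
def IsLeftRect {n : ℕ} (I : SPInstance n) (d : FQW I) (pos : Fin n → ℝ × ℝ)
    (iT iL : Fin n) : Prop :=
  (iL ∈ d.Q ∧ (pos iL).1 = 0 ∧ ∀ j ∈ d.Q, (pos j).1 = 0 → iL ≤ j) ∨
  ((∀ j ∈ d.Q, (pos j).1 ≠ 0) ∧ iL = iT)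

/-- The region `H' = [0, W] × ([0, h_{r_T}] ∪ [y_{r_T}, y_{r_T} + h_{r_T}])`. -/
def Hprime {n : ℕ} (I : SPInstance n) (pos : Fin n → ℝ × ℝ) (iT : Fin n) :
    Set (ℝ × ℝ) :=
  Set.Icc 0 I.W ×ˢ
    (Set.Icc 0 (I.r iT).h ∪ Set.Icc (pos iT).2 ((pos iT).2 + (I.r iT).h))

/-- The type `T(ℓ)` of the proper horizontal line at height `t`: the rectangles
of `Q` intersecting the line whose index is smaller than the least index `j`
with `y_{r_j} > t` (equivalently, all rectangles with index at most theirs have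
bottom face at height at most `t`). -/
noncomputable def TypeOf {n : ℕ} (I : SPInstance n) (d : FQW I)
    (pos : Fin n → ℝ × ℝ) (t : ℝ) : Finset (Fin n) :=
  Finset.univ.filter fun i =>
    i ∈ d.Q ∧ I.Intersects pos i t ∧ ∀ j : Fin n, j ≤ i → (pos j).2 ≤ t

/-- `i` is `LM(ℓ)`: the rectangle of `T(ℓ)` with smallest `x`-coordinate. -/
def IsLM {n : ℕ} (I : SPInstance n) (d : FQW I) (pos : Fin n → ℝ × ℝ) (t : ℝ)
    (i : Fin n) : Prop :=
  i ∈ TypeOf I d pos t ∧ ∀ j ∈ TypeOf I d pos t, (pos i).1 ≤ (pos j).1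

/-- The horizontal line at height `t` lies in `H_{a+2} ∪ ⋯ ∪ H_L`, where `iL`
is the `0`-based index of `r_L` (so `L = iL + 1`, `1`-based). -/
def LineInHUnion {n : ℕ} (I : SPInstance n) (d : FQW I) (pos : Fin n → ℝ × ℝ)
    (iL : Fin n) (t : ℝ) : Prop :=
  ∃ m : Fin n, d.F.card + 1 ≤ (m : ℕ) ∧ m ≤ iL ∧
    maxYBelow pos (m : ℕ) ≤ t ∧ t < (pos m).2

/-- The space `H_{a+2} ∪ ⋯ ∪ H_L`, where `iL` is the `0`-based index of `r_L`. -/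
def regionHUnion {n : ℕ} (I : SPInstance n) (d : FQW I) (pos : Fin n → ℝ × ℝ)
    (iL : Fin n) : Set (ℝ × ℝ) :=
  ⋃ m ∈ {m : Fin n | d.F.card + 1 ≤ (m : ℕ) ∧ m ≤ iL}, I.regionH pos m

/-- The horizontal line at height `t` belongs to `L^k`: it is a proper line of
order `k` lying in `H_{a+2} ∪ ⋯ ∪ H_L`. -/
def InLk {n : ℕ} (I : SPInstance n) (d : FQW I) (pos : Fin n → ℝ × ℝ)
    (iL : Fin n) (k : ℕ) (t : ℝ) : Prop :=
  I.ProperLine pos t ∧ LineInHUnion I d pos iL t ∧ (TypeOf I d pos t).card = k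

/-- `i` belongs to `R^k`: it is `LM(ℓ)` for some line `ℓ ∈ L^k`. -/
def InRk {n : ℕ} (I : SPInstance n) (d : FQW I) (pos : Fin n → ℝ × ℝ)
    (iL : Fin n) (k : ℕ) (i : Fin n) : Prop :=
  ∃ t : ℝ, InLk I d pos iL k t ∧ IsLM I d pos t i

/-- `i` is `LM^k`: the rectangle of `R^k` with smallest `x`-coordinate,
ties broken by largest `y`-coordinate. -/
def IsLMk {n : ℕ} (I : SPInstance n) (d : FQW I) (pos : Fin n → ℝ × ℝ)
    (iL : Fin n) (k : ℕ) (i : Fin n) : Prop :=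
  InRk I d pos iL k i ∧ ∀ j : Fin n, InRk I d pos iL k j →
    (pos i).1 < (pos j).1 ∨ ((pos i).1 = (pos j).1 ∧ (pos j).2 ≤ (pos i).2)

/-- `v = x_F^ℓ` for the line `ℓ` at height `t`: the right face `x + w` of the
rightmost rectangle of `F` intersecting `ℓ`, and `0` if there is none. -/
def IsXF {n : ℕ} (I : SPInstance n) (d : FQW I) (pos : Fin n → ℝ × ℝ)
    (t v : ℝ) : Prop :=
  ((∃ f ∈ d.F, I.Intersects pos f t ∧ v = (pos f).1 + (I.r f).w) ∧
    ∀ f ∈ d.F, I.Intersects pos f t → (pos f).1 + (I.r f).w ≤ v) ∨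
  ((∀ f ∈ d.F, ¬ I.Intersects pos f t) ∧ v = 0)

/-!
In the Bottom-Left packing the rectangles of `F` stand side by side on the bottom of the strip, and
as they are sorted by height, those taller than `t` fill a prefix of length `X(t)` of every line at
height `t`. Let the line be in the region below `r_m ∈ Q`, where `r_m` is the first rectangle
placed above it. Since `r_m` did not fit on the line, every window of width `w_m` to the right of
`X(t)` meets one of the `k` rectangles of the type, each of width at least `w_m`. If `S` is their
total width, this gives `W ≤ X(t) + w_m + S + k w_m`, and the bound `k / (2 k + 1)` follows
from `k w_m ≤ S`.

The leftmost rectangle of a type always leans against the profile of `F`, i.e. `x = X(y)`. This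
saves the window to its left, so `W ≤ x + 2 S` on each line where it is the leftmost one. A line
of `L^k` above `LM^k` would have a leftmost rectangle preferred to `LM^k`; a line below `LM^k` has
`X(t) ≥ x_{LM^k}` and, `Q` being sorted by width, a type at least as wide as those above, hence
is half occupied.
-/

section Sums

theorem exists_sum_Iio_le_lt_sum_Iic {ι M : Type*} [LinearOrder ι] [LocallyFiniteOrderBot ι]
    [AddCommMonoid M] [LinearOrder M] {f : ι → M} {s : Finset ι}
    (hs : IsLowerSet (s : Set ι)) {z : M} (hz : 0 ≤ z) (hzs : z < ∑ i ∈ s, f i) :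
    ∃ i ∈ s, ∑ j ∈ Finset.Iio i, f j ≤ z ∧ z < ∑ j ∈ Finset.Iic i, f j := by
  induction s using Finset.induction_on_max with
  | empty => exact absurd hzs (by simpa using hz)
  | insert a s hlt ih =>
    obtain rfl : s = Finset.Iio a := by
      ext j
      rw [Finset.mem_Iio]
      refine ⟨hlt j, fun hj => ?_⟩
      have hmem : j ∈ insert a s := hs hj.le (Finset.mem_insert_self a s)
      exact (Finset.mem_insert.1 hmem).resolve_left hj.ne
    rcases lt_or_ge z (∑ j ∈ Finset.Iio a, f j) with hza | hza
    · obtain ⟨i, hi, hiz⟩ := ih (by simpa using isLowerSet_Iio a) hza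
      exact ⟨i, Finset.mem_insert_of_mem hi, hiz⟩
    · rw [Finset.Iio_insert] at hzs
      exact ⟨a, Finset.mem_insert_self _ _, hza, hzs⟩

theorem sum_le_sum_of_card_le_of_sdiff {ι M : Type*} [DecidableEq ι] [AddCommMonoid M]
    [PartialOrder M] [IsOrderedCancelAddMonoid M] {A B : Finset ι} {f : ι → M} {c : M}
    (hc : 0 ≤ c) (hcard : A.card ≤ B.card) (hA : ∀ i ∈ A \ B, f i ≤ c)
    (hB : ∀ i ∈ B \ A, c ≤ f i) : ∑ i ∈ A, f i ≤ ∑ i ∈ B, f i := by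
  rw [← Finset.sum_sdiff_le_sum_sdiff]
  calc ∑ i ∈ A \ B, f i
      ≤ (A \ B).card • c := Finset.sum_le_card_nsmul _ _ _ hA
    _ ≤ (B \ A).card • c :=
        nsmul_le_nsmul_left hc (Finset.card_sdiff_le_card_sdiff_iff.2 hcard)
    _ ≤ ∑ i ∈ B \ A, f i := Finset.card_nsmul_le_sum _ _ _ hB

theorem sub_le_sum_length_of_cover {ι : Type*} {s : Finset ι} {x l : ι → ℝ} {a b : ℝ}
    (hl : ∀ i ∈ s, 0 ≤ l i)
    (hcover : ∀ z ∈ Set.Icc a b, ∃ i ∈ s, z ∈ Set.Icc (x i) (x i + l i)) :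
    b - a ≤ ∑ i ∈ s, l i := by
  rcases lt_or_ge b a with hba | hab
  · exact (sub_neg.2 hba).le.trans (Finset.sum_nonneg hl)
  calc b - a
      = volume.real (Set.Icc a b) := (Real.volume_real_Icc_of_le hab).symm
    _ ≤ volume.real (⋃ i ∈ s, Set.Icc (x i) (x i + l i)) := by
        refine measureReal_mono (fun z hz => ?_) ?_
        · simpa only [Set.mem_iUnion, exists_prop] using hcover z hz
        · exact (measure_biUnion_lt_top s.finite_toSet fun i _ => measure_Icc_lt_top).ne
    _ ≤ ∑ i ∈ s, volume.real (Set.Icc (x i) (x i + l i)) := measureReal_biUnion_finset_le _ _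
    _ = ∑ i ∈ s, l i := Finset.sum_congr rfl fun i hi => by
        rw [Real.volume_real_Icc_of_le (le_add_of_nonneg_right (hl i hi)), add_sub_cancel_left]

end Sums

section Boxes

theorem disjoint_Ioo_add_iff {a b l l' : ℝ} (hl : 0 < l) (hl' : 0 < l') :
    Disjoint (Set.Ioo a (a + l)) (Set.Ioo b (b + l')) ↔ a + l ≤ b ∨ b + l' ≤ a := by
  simp only [Set.Ioo_disjoint_Ioo, min_le_iff, le_max_iff]
  grind

theorem disjoint_openBox_iff {R R' : Rect} {p p' : ℝ × ℝ} (hw : 0 < R.w) (hw' : 0 < R'.w)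
    (hh : 0 < R.h) (hh' : 0 < R'.h) :
    Disjoint (openBox R p) (openBox R' p') ↔
      (p.1 + R.w ≤ p'.1 ∨ p'.1 + R'.w ≤ p.1) ∨ (p.2 + R.h ≤ p'.2 ∨ p'.2 + R'.h ≤ p.2) := by
  rw [openBox, openBox, Set.disjoint_prod, disjoint_Ioo_add_iff hw hw',
    disjoint_Ioo_add_iff hh hh']

end Boxes

namespace SPInstance

variable {n : ℕ} {I : SPInstance n} {pos : Fin n → ℝ × ℝ}

/-- The sum of the widths of the rectangles with index in `s`. -/
noncomputable def totalWidth (I : SPInstance n) (s : Finset (Fin n)) : ℝ :=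
  ∑ i ∈ s, (I.r i).w

theorem totalWidth_nonneg (I : SPInstance n) (s : Finset (Fin n)) : 0 ≤ I.totalWidth s :=
  Finset.sum_nonneg fun i _ => (I.w_pos i).le

theorem totalWidth_mono (I : SPInstance n) {s s' : Finset (Fin n)} (h : s ⊆ s') :
    I.totalWidth s ≤ I.totalWidth s' :=
  Finset.sum_le_sum_of_subset_of_nonneg h fun i _ _ => (I.w_pos i).le

theorem totalWidth_Iio_add (I : SPInstance n) (i : Fin n) :
    I.totalWidth (Finset.Iio i) + (I.r i).w = I.totalWidth (Finset.Iic i) := by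
  rw [totalWidth, totalWidth, ← Finset.Iio_insert, Finset.sum_insert Finset.notMem_Iio_self,
    add_comm]

theorem sub_le_totalWidth_add_of_cover {s : Finset (Fin n)} {a δ : ℝ} (hδ : 0 ≤ δ)
    (hcover : ∀ z ∈ Set.Icc a I.W,
      ∃ j ∈ s, z ∈ Set.Icc (pos j).1 ((pos j).1 + ((I.r j).w + δ))) :
    I.W - a ≤ I.totalWidth s + s.card * δ := by
  have h := sub_le_sum_length_of_cover (fun j _ => add_nonneg (I.w_pos j).le hδ) hcover
  rwa [Finset.sum_add_distrib, Finset.sum_const, nsmul_eq_mul] at h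

theorem totalWidth_greedyF_le (I : SPInstance n) (σ : Equiv.Perm (Fin n)) :
    I.totalWidth (I.greedyF σ) ≤ I.W := by
  refine List.foldlRecOn (motive := fun F => I.totalWidth F ≤ I.W) _ _ ?_ ?_
  · simpa [totalWidth] using I.W_pos.le
  · intro F hF i _
    split_ifs with hfit
    · by_cases hi : σ i ∈ F
      · rwa [Finset.insert_eq_of_mem hi]
      · rwa [totalWidth, Finset.sum_insert hi]
    · exact hF

namespace IsBL

theorem left_nonneg (hBL : I.IsBL pos) (i : Fin n) : 0 ≤ (pos i).1 := (hBL i).1.1.1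

theorem right_le (hBL : I.IsBL pos) (i : Fin n) : (pos i).1 + (I.r i).w ≤ I.W := (hBL i).1.1.2.1

theorem bottom_nonneg (hBL : I.IsBL pos) (i : Fin n) : 0 ≤ (pos i).2 := (hBL i).1.1.2.2

theorem separated (hBL : I.IsBL pos) {i j : Fin n} (hij : i ≠ j) :
    ((pos i).1 + (I.r i).w ≤ (pos j).1 ∨ (pos j).1 + (I.r j).w ≤ (pos i).1) ∨
      ((pos i).2 + (I.r i).h ≤ (pos j).2 ∨ (pos j).2 + (I.r j).h ≤ (pos i).2) := by
  rw [← disjoint_openBox_iff (I.w_pos i) (I.w_pos j) (I.h_pos i) (I.h_pos j)]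
  rcases hij.lt_or_gt with h | h
  · exact ((hBL j).1.2 i h).symm
  · exact (hBL i).1.2 j h

theorem right_le_left_or (hBL : I.IsBL pos) {i j : Fin n} (hij : i ≠ j)
    (hi : (pos i).2 < (pos j).2 + (I.r j).h) (hj : (pos j).2 < (pos i).2 + (I.r i).h) :
    (pos i).1 + (I.r i).w ≤ (pos j).1 ∨ (pos j).1 + (I.r j).w ≤ (pos i).1 :=
  (hBL.separated hij).resolve_right (by simp [hi, hj])

theorem top_le_bottom_or (hBL : I.IsBL pos) {i j : Fin n} (hij : i ≠ j)
    (hi : (pos i).1 < (pos j).1 + (I.r j).w) (hj : (pos j).1 < (pos i).1 + (I.r i).w) :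
    (pos i).2 + (I.r i).h ≤ (pos j).2 ∨ (pos j).2 + (I.r j).h ≤ (pos i).2 :=
  (hBL.separated hij).resolve_left (by simp [hi, hj])

theorem exists_overlap (hBL : I.IsBL pos) {i : Fin n} {p : ℝ × ℝ} (hp : I.InStrip i p)
    (hlt : p.2 < (pos i).2 ∨ p.2 = (pos i).2 ∧ p.1 < (pos i).1) :
    ∃ j < i, (p.1 < (pos j).1 + (I.r j).w ∧ (pos j).1 < p.1 + (I.r i).w) ∧
      p.2 < (pos j).2 + (I.r j).h ∧ (pos j).2 < p.2 + (I.r i).h := by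
  by_contra! hno
  have hfeasible : I.FeasibleAt pos i p := by
    refine ⟨hp, fun j hj => ?_⟩
    rw [disjoint_openBox_iff (I.w_pos i) (I.w_pos j) (I.h_pos i) (I.h_pos j)]
    have := hno j hj
    grind
  have := (hBL i).2 p hfeasible
  grind

theorem totalWidth_le_left_of_side_by_side (hBL : I.IsBL pos) {i : Fin n} {s : Finset (Fin n)}
    (hs : IsLowerSet (s : Set (Fin n))) (hi : i ∉ s)
    (hleft : ∀ j ∈ s, (pos j).1 = I.totalWidth (Finset.Iio j))
    (hbottom : ∀ j ∈ s, (pos j).2 < (pos i).2 + (I.r i).h)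
    (htop : ∀ j ∈ s, (pos i).2 < (pos j).2 + (I.r j).h) : I.totalWidth s ≤ (pos i).1 := by
  by_contra! hlt
  obtain ⟨j, hj, hjleft, hjright⟩ :=
    exists_sum_Iio_le_lt_sum_Iic hs (hBL.left_nonneg i) hlt
  rw [← totalWidth, ← hleft j hj] at hjleft
  rw [← totalWidth, ← totalWidth_Iio_add, ← hleft j hj] at hjright
  rcases hBL.right_le_left_or (ne_of_mem_of_not_mem hj hi) (hbottom j hj) (htop j hj) with h | h
  · exact h.not_gt hjright
  · linarith [I.w_pos i]

theorem pos_eq_of_totalWidth_Iic_le (hBL : I.IsBL pos) {i : Fin n}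
    (hi : I.totalWidth (Finset.Iic i) ≤ I.W) : pos i = (I.totalWidth (Finset.Iio i), 0) := by
  induction i using WellFoundedLT.induction with
  | ind i ih =>
    have hprev : ∀ j < i, pos j = (I.totalWidth (Finset.Iio j), 0) := fun j hj =>
      ih j hj ((I.totalWidth_mono (Finset.Iic_subset_Iic.2 hj.le)).trans hi)
    have hnot_lex_lt : ¬ (0 < (pos i).2 ∨
        0 = (pos i).2 ∧ I.totalWidth (Finset.Iio i) < (pos i).1) := by
      intro hlt
      obtain ⟨j, hj, ⟨hleft, -⟩, -⟩ := hBL.exists_overlap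
        (p := (I.totalWidth (Finset.Iio i), 0))
        ⟨I.totalWidth_nonneg _, (I.totalWidth_Iio_add i).trans_le hi, le_rfl⟩ hlt
      rw [hprev j hj, totalWidth_Iio_add] at hleft
      have hsub : Finset.Iic j ⊆ Finset.Iio i := fun a ha =>
        Finset.mem_Iio.2 ((Finset.mem_Iic.1 ha).trans_lt hj)
      exact (I.totalWidth_mono hsub).not_gt hleft
    push Not at hnot_lex_lt
    have hbottom : (pos i).2 = 0 := hnot_lex_lt.1.antisymm (hBL.bottom_nonneg i)
    refine Prod.ext ((hnot_lex_lt.2 hbottom.symm).antisymm ?_) hbottom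
    refine hBL.totalWidth_le_left_of_side_by_side (by simpa using isLowerSet_Iio i) (by simp)
      (fun j hj => ?_) (fun j hj => ?_) fun j hj => ?_
    all_goals rw [hprev j (Finset.mem_Iio.1 hj)]
    · simpa [hbottom] using I.h_pos i
    · simpa [hbottom] using I.h_pos j

theorem totalWidth_div_le_occFrac (hBL : I.IsBL pos) {t : ℝ} {s : Finset (Fin n)}
    (hs : ∀ i ∈ s, I.Intersects pos i t) : I.totalWidth s / I.W ≤ I.occFrac pos t := by
  refine div_le_div_of_nonneg_right ?_ I.W_pos.le
  have hdisjoint : (s : Set (Fin n)).PairwiseDisjoint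
      fun i => Set.Ioo (pos i).1 ((pos i).1 + (I.r i).w) := fun i hi j hj hij =>
    (disjoint_Ioo_add_iff (I.w_pos i) (I.w_pos j)).2 <|
      hBL.right_le_left_or hij ((hs i hi).1.trans (hs j hj).2) ((hs j hj).1.trans (hs i hi).2)
  have hbounded : I.occupied pos t ⊆ Set.Icc 0 I.W :=
    Set.iUnion₂_subset fun i _ => Set.Icc_subset_Icc (hBL.left_nonneg i) (hBL.right_le i)
  calc I.totalWidth s
      = ∑ i ∈ s, volume.real (Set.Ioo (pos i).1 ((pos i).1 + (I.r i).w)) :=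
        Finset.sum_congr rfl fun i _ => by
          rw [Real.volume_real_Ioo_of_le (le_add_of_nonneg_right (I.w_pos i).le),
            add_sub_cancel_left]
    _ = volume.real (⋃ i ∈ s, Set.Ioo (pos i).1 ((pos i).1 + (I.r i).w)) :=
        (measureReal_biUnion_finset hdisjoint (fun _ _ => measurableSet_Ioo)
          fun _ _ => measure_Ioo_lt_top.ne).symm
    _ ≤ volume.real (I.occupied pos t) :=
        measureReal_mono
          (Set.iUnion₂_subset fun i hi =>
            Set.Ioo_subset_Icc_self.trans <|
              Set.subset_biUnion_of_mem (s := {i | I.Intersects pos i t})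
                (u := fun i => Set.Icc (pos i).1 ((pos i).1 + (I.r i).w)) (hs i hi))
          (measure_ne_top_of_subset hbounded measure_Icc_lt_top.ne)

end IsBL

end SPInstance

namespace FQW

variable {n : ℕ} {I : SPInstance n} {pos : Fin n → ℝ × ℝ} {d : FQW I}

/-- The rectangles of `F` of height greater than `t`. In the Bottom-Left packing of an FQW-ordering
they are the rectangles of `F` reaching above the line at height `t`. -/
noncomputable def tall (d : FQW I) (t : ℝ) : Finset (Fin n) :=
  d.F.filter fun i => t < (I.r i).h

theorem mem_tall {t : ℝ} {i : Fin n} : i ∈ d.tall t ↔ i ∈ d.F ∧ t < (I.r i).h :=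
  Finset.mem_filter

theorem tall_antitone (d : FQW I) : Antitone d.tall := fun _ _ h _ hi =>
  mem_tall.2 ⟨(mem_tall.1 hi).1, h.trans_lt (mem_tall.1 hi).2⟩

theorem totalWidth_tall_antitone (d : FQW I) : Antitone fun t => I.totalWidth (d.tall t) :=
  fun _ _ h => I.totalWidth_mono (d.tall_antitone h)

theorem notMem_F_of_mem_Q {i : Fin n} (hi : i ∈ d.Q) : i ∉ d.F :=
  (Finset.mem_filter.1 hi).2.1

namespace IsOrdered

theorem mem_F_of_le (hord : d.IsOrdered) {i j : Fin n} (hij : i ≤ j) (hj : j ∈ d.F) : i ∈ d.F :=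
  (hord.1 i).2 (lt_of_le_of_lt hij ((hord.1 j).1 hj))

theorem mem_Q_of_le (hord : d.IsOrdered) {i j : Fin n} (hi : i ∉ d.F) (hij : i ≤ j)
    (hj : j ∈ d.Q) : i ∈ d.Q :=
  (hord.2.1 i).2 ⟨not_lt.1 (mt (hord.1 i).2 hi), lt_of_le_of_lt hij ((hord.2.1 j).1 hj).2⟩

theorem lt_of_mem_F_of_mem_Q (hord : d.IsOrdered) {i j : Fin n} (hi : i ∈ d.F) (hj : j ∈ d.Q) :
    i < j :=
  Fin.lt_def.2 (((hord.1 i).1 hi).trans_le ((hord.2.1 j).1 hj).1)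

theorem height_le (hord : d.IsOrdered) {i j : Fin n} (hij : i ≤ j) (hj : j ∈ d.F) :
    (I.r j).h ≤ (I.r i).h :=
  hord.2.2.1 i j hij ((hord.1 j).1 hj)

theorem width_le (hord : d.IsOrdered) {i j : Fin n} (hi : i ∈ d.Q) (hij : i ≤ j) (hj : j ∈ d.Q) :
    (I.r j).w ≤ (I.r i).w :=
  hord.2.2.2 i j ((hord.2.1 i).1 hi).1 hij ((hord.2.1 j).1 hj).2

theorem isLowerSet_tall (hord : d.IsOrdered) (t : ℝ) : IsLowerSet (d.tall t : Set (Fin n)) := by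
  intro j i hij hj
  obtain ⟨hjF, hjt⟩ := mem_tall.1 hj
  exact mem_tall.2 ⟨hord.mem_F_of_le hij hjF, hjt.trans_le (hord.height_le hij hjF)⟩

theorem pos_eq_of_mem_F (hord : d.IsOrdered) (hBL : I.IsBL pos) {i : Fin n} (hi : i ∈ d.F) :
    pos i = (I.totalWidth (Finset.Iio i), 0) := by
  refine hBL.pos_eq_of_totalWidth_Iic_le ?_
  have hsub : Finset.Iic i ⊆ d.F := fun j hj => hord.mem_F_of_le (Finset.mem_Iic.1 hj) hi
  exact (I.totalWidth_mono hsub).trans (I.totalWidth_greedyF_le d.σ)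

theorem right_le_totalWidth_tall (hord : d.IsOrdered) (hBL : I.IsBL pos) {t : ℝ} {i : Fin n}
    (hi : i ∈ d.tall t) : (pos i).1 + (I.r i).w ≤ I.totalWidth (d.tall t) := by
  rw [hord.pos_eq_of_mem_F hBL (mem_tall.1 hi).1, I.totalWidth_Iio_add]
  exact I.totalWidth_mono fun j hj => hord.isLowerSet_tall t (Finset.mem_Iic.1 hj) hi

theorem totalWidth_tall_le_left (hord : d.IsOrdered) (hBL : I.IsBL pos) {i : Fin n}
    (hi : i ∉ d.F) : I.totalWidth (d.tall (pos i).2) ≤ (pos i).1 := by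
  have hpos : ∀ j ∈ d.tall (pos i).2, pos j = (I.totalWidth (Finset.Iio j), 0) := fun j hj =>
    hord.pos_eq_of_mem_F hBL (mem_tall.1 hj).1
  refine hBL.totalWidth_le_left_of_side_by_side (hord.isLowerSet_tall _)
    (mt (fun h => (mem_tall.1 h).1) hi) (fun j hj => ?_) (fun j hj => ?_) fun j hj => ?_
  all_goals rw [hpos j hj]
  · exact add_pos_of_nonneg_of_pos (hBL.bottom_nonneg i) (I.h_pos i)
  · simpa using (mem_tall.1 hj).2

end IsOrdered

end FQW

/-- `m` is the first rectangle in the ordering lying above the horizontal line at height `t`, i.e.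
the index `j` in the definition of `T(ℓ)`; moreover `m` belongs to `Q` and the line is not below the
strip. The line is required to avoid the bottom faces of the rectangles preceding `m`. -/
structure IsFirstAbove {n : ℕ} {I : SPInstance n} (d : FQW I) (pos : Fin n → ℝ × ℝ) (t : ℝ)
    (m : Fin n) : Prop where
  mem_Q : m ∈ d.Q
  nonneg : 0 ≤ t
  bottom_lt : ∀ j < m, (pos j).2 < t
  lt_bottom : t < (pos m).2

theorem bottom_le_maxYBelow {n : ℕ} (pos : Fin n → ℝ × ℝ) {j m : Fin n} (hj : j < m) :
    (pos j).2 ≤ maxYBelow pos m :=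
  le_ciSup (f := fun j : {j : Fin n // (j : ℕ) < m} => (pos j).2)
    (Set.finite_range _).bddAbove ⟨j, hj⟩

section Lines

variable {n : ℕ} {I : SPInstance n} {d : FQW I} {pos : Fin n → ℝ × ℝ} {t t' : ℝ}
  {i m m' r s : Fin n}

theorem InLk.exists_isFirstAbove (hord : d.IsOrdered) (hBL : I.IsBL pos) (hi : i ∈ d.Q) {k : ℕ}
    (ht : InLk I d pos i k t) : ∃ m, IsFirstAbove d pos t m := by
  obtain ⟨hproper, ⟨m, hFm, hmi, hmax, htm⟩, -⟩ := ht
  have hbottom_lt : ∀ j < m, (pos j).2 < t := fun j hj =>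
    ((bottom_le_maxYBelow pos hj).trans hmax).lt_of_ne (hproper j).1.symm
  have hmF : m ∉ d.F := fun h => by have := (hord.1 m).1 h; omega
  have hn : 0 < n := m.pos
  have hzero : (⟨0, hn⟩ : Fin n) < m := (Nat.succ_pos _).trans_le hFm
  exact ⟨m, hord.mem_Q_of_le hmF hmi hi,
    (hBL.bottom_nonneg _).trans (hbottom_lt _ hzero).le, hbottom_lt, htm⟩

namespace IsFirstAbove

theorem mem_typeOf_iff (hm : IsFirstAbove d pos t m) {j : Fin n} :
    j ∈ TypeOf I d pos t ↔ j ∈ d.Q ∧ j < m ∧ I.Intersects pos j t := by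
  simp only [TypeOf, Finset.mem_filter, Finset.mem_univ, true_and]
  constructor
  · rintro ⟨hjQ, hint, hbelow⟩
    exact ⟨hjQ, not_le.1 fun hmj => (hbelow m hmj).not_gt hm.lt_bottom, hint⟩
  · rintro ⟨hjQ, hjm, hint⟩
    exact ⟨hjQ, hint, fun j' hj' => (hm.bottom_lt j' (hj'.trans_lt hjm)).le⟩

theorem width_le_of_mem_typeOf (hm : IsFirstAbove d pos t m) (hord : d.IsOrdered) {j : Fin n}
    (hj : j ∈ TypeOf I d pos t) : (I.r m).w ≤ (I.r j).w := by
  obtain ⟨hjQ, hjm, -⟩ := hm.mem_typeOf_iff.1 hj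
  exact hord.width_le hjQ hjm.le hm.mem_Q

theorem card_typeOf_mul_le (hm : IsFirstAbove d pos t m) (hord : d.IsOrdered) :
    (TypeOf I d pos t).card * (I.r m).w ≤ I.totalWidth (TypeOf I d pos t) := by
  rw [← nsmul_eq_mul]
  exact Finset.card_nsmul_le_sum _ _ _ fun j hj => hm.width_le_of_mem_typeOf hord hj

theorem exists_mem_typeOf_meeting_window (hm : IsFirstAbove d pos t m) (hord : d.IsOrdered)
    (hBL : I.IsBL pos) {u : ℝ} (hu : I.totalWidth (d.tall t) ≤ u) (huW : u + (I.r m).w ≤ I.W) :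
    ∃ j ∈ TypeOf I d pos t, u < (pos j).1 + (I.r j).w ∧ (pos j).1 < u + (I.r m).w := by
  obtain ⟨j, hjm, ⟨hleft, hright⟩, htop, -⟩ := hBL.exists_overlap (p := (u, t))
    ⟨(I.totalWidth_nonneg _).trans hu, huW, hm.nonneg⟩ (Or.inl hm.lt_bottom)
  dsimp only at hleft hright htop
  have hjF : j ∉ d.F := by
    intro hjF
    rw [congrArg Prod.snd (hord.pos_eq_of_mem_F hBL hjF), zero_add] at htop
    linarith [hord.right_le_totalWidth_tall hBL (FQW.mem_tall.2 ⟨hjF, htop⟩)]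
  exact ⟨j, hm.mem_typeOf_iff.2
    ⟨hord.mem_Q_of_le hjF hjm.le hm.mem_Q, hjm, hm.bottom_lt j hjm, htop⟩, hleft, hright⟩

theorem totalWidth_add_div_le_occFrac (hm : IsFirstAbove d pos t m) (hord : d.IsOrdered)
    (hBL : I.IsBL pos) :
    (I.totalWidth (d.tall t) + I.totalWidth (TypeOf I d pos t)) / I.W ≤ I.occFrac pos t := by
  have hdisjoint : Disjoint (d.tall t) (TypeOf I d pos t) :=
    Finset.disjoint_left.2 fun j hj hj' =>
      FQW.notMem_F_of_mem_Q (hm.mem_typeOf_iff.1 hj').1 (FQW.mem_tall.1 hj).1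
  have htall : ∀ j ∈ d.tall t, I.Intersects pos j t := fun j hj => by
    obtain ⟨hjF, hjt⟩ := FQW.mem_tall.1 hj
    refine ⟨hm.bottom_lt j (hord.lt_of_mem_F_of_mem_Q hjF hm.mem_Q), ?_⟩
    simpa [hord.pos_eq_of_mem_F hBL hjF] using hjt
  have hunion := hBL.totalWidth_div_le_occFrac (s := d.tall t ∪ TypeOf I d pos t) fun j hj =>
    (Finset.mem_union.1 hj).elim (htall j) fun hj => (hm.mem_typeOf_iff.1 hj).2.2
  rwa [SPInstance.totalWidth, Finset.sum_union hdisjoint] at hunion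

theorem width_sub_le (hm : IsFirstAbove d pos t m) (hord : d.IsOrdered) (hBL : I.IsBL pos) :
    I.W - (I.totalWidth (d.tall t) + (I.r m).w) ≤
      I.totalWidth (TypeOf I d pos t) + (TypeOf I d pos t).card * (I.r m).w := by
  refine SPInstance.sub_le_totalWidth_add_of_cover (pos := pos) (I.w_pos m).le fun z hz => ?_
  obtain ⟨j, hj, hright, hleft⟩ := hm.exists_mem_typeOf_meeting_window hord hBL
    (u := z - (I.r m).w) (by linarith [hz.1]) (by linarith [hz.2])
  exact ⟨j, hj, by linarith, by linarith⟩

theorem card_div_le_occFrac (hm : IsFirstAbove d pos t m) (hord : d.IsOrdered)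
    (hBL : I.IsBL pos) :
    ((TypeOf I d pos t).card : ℝ) / (2 * (TypeOf I d pos t).card + 1) ≤ I.occFrac pos t := by
  refine le_trans ?_ (hm.totalWidth_add_div_le_occFrac hord hBL)
  rw [div_le_div_iff₀ (by positivity) I.W_pos]
  have hcover := hm.width_sub_le hord hBL
  have hnarrow := hm.card_typeOf_mul_le hord
  have htall := I.totalWidth_nonneg (d.tall t)
  set k : ℝ := ((TypeOf I d pos t).card : ℝ)
  set X := I.totalWidth (d.tall t)
  set S := I.totalWidth (TypeOf I d pos t)
  have hk : 0 ≤ k := Nat.cast_nonneg _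
  calc k * I.W
      ≤ k * (X + S) + (k + 1) * (k * (I.r m).w) := by
        linarith [mul_le_mul_of_nonneg_left hcover hk]
    _ ≤ k * (X + S) + (k + 1) * S := by gcongr
    _ ≤ (X + S) * (2 * k + 1) := by nlinarith [mul_nonneg hk htall]

theorem left_eq_totalWidth_tall (hm : IsFirstAbove d pos t m) (hord : d.IsOrdered)
    (hBL : I.IsBL pos) (hr : IsLM I d pos t r) :
    (pos r).1 = I.totalWidth (d.tall (pos r).2) := by
  obtain ⟨hrQ, hrm, -⟩ := hm.mem_typeOf_iff.1 hr.1
  have hprofile := hord.totalWidth_tall_le_left hBL (FQW.notMem_F_of_mem_Q hrQ)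
  refine (not_lt.1 fun hlt => ?_).antisymm hprofile
  obtain ⟨q, hqr, ⟨hqright, hqleft⟩, hqtop, hqbottom⟩ := hBL.exists_overlap (i := r)
    (p := (I.totalWidth (d.tall (pos r).2), (pos r).2))
    ⟨I.totalWidth_nonneg _, by linarith [hBL.right_le r], hBL.bottom_nonneg r⟩
    (Or.inr ⟨rfl, hlt⟩)
  dsimp only at hqright hqleft hqtop hqbottom
  have hqF : q ∉ d.F := fun hqF => by
    rw [congrArg Prod.snd (hord.pos_eq_of_mem_F hBL hqF), zero_add] at hqtop
    exact (hord.right_le_totalWidth_tall hBL (FQW.mem_tall.2 ⟨hqF, hqtop⟩)).not_gt hqright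
  have hqr_right : (pos q).1 + (I.r q).w ≤ (pos r).1 :=
    (hBL.right_le_left_or hqr.ne hqbottom hqtop).resolve_right (by linarith)
  have hqm := hqr.trans hrm
  have hwidth := hord.width_le (hord.mem_Q_of_le hqF hqm.le hm.mem_Q) hqm.le hm.mem_Q
  have htall : I.totalWidth (d.tall t) ≤ (pos q).1 :=
    (d.totalWidth_tall_antitone (hm.bottom_lt q hqm).le).trans
      (hord.totalWidth_tall_le_left hBL hqF)
  -- `q` is at least as wide as `r_m`, so the window at its left face meets the type left of `r`.
  obtain ⟨j, hj, -, hjleft⟩ := hm.exists_mem_typeOf_meeting_window hord hBL htall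
    (by linarith [hBL.right_le q])
  linarith [hr.2 j hj]

theorem width_le_left_add_two_mul (hm : IsFirstAbove d pos t m) (hord : d.IsOrdered)
    (hBL : I.IsBL pos) (hr : IsLM I d pos t r) :
    I.W ≤ (pos r).1 + 2 * I.totalWidth (TypeOf I d pos t) := by
  obtain ⟨hrQ, hrm, -⟩ := hm.mem_typeOf_iff.1 hr.1
  have htall : I.totalWidth (d.tall t) ≤ (pos r).1 :=
    (d.totalWidth_tall_antitone (hm.bottom_lt r hrm).le).trans
      (hord.totalWidth_tall_le_left hBL (FQW.notMem_F_of_mem_Q hrQ))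
  have hcover := SPInstance.sub_le_totalWidth_add_of_cover (a := (pos r).1)
    (s := TypeOf I d pos t) (pos := pos) (I.w_pos m).le fun z hz => by
      rcases le_or_gt z ((pos r).1 + ((I.r r).w + (I.r m).w)) with hzr | hzr
      · exact ⟨r, hr.1, hz.1, hzr⟩
      · obtain ⟨j, hj, hright, hleft⟩ := hm.exists_mem_typeOf_meeting_window hord hBL
          (u := z - (I.r m).w) (by linarith [I.w_pos r]) (by linarith [hz.2])
        exact ⟨j, hj, by linarith, by linarith⟩
  linarith [hm.card_typeOf_mul_le hord]

theorem totalWidth_typeOf_le (hm : IsFirstAbove d pos t m) (hm' : IsFirstAbove d pos t' m')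
    (hord : d.IsOrdered) (htt' : t ≤ t')
    (hcard : (TypeOf I d pos t').card ≤ (TypeOf I d pos t).card) :
    I.totalWidth (TypeOf I d pos t') ≤ I.totalWidth (TypeOf I d pos t) := by
  refine sum_le_sum_of_card_le_of_sdiff (I.w_pos m).le hcard (fun j hj => ?_) fun j hj =>
    hm.width_le_of_mem_typeOf hord (Finset.mem_sdiff.1 hj).1
  obtain ⟨hj', hj⟩ := Finset.mem_sdiff.1 hj
  obtain ⟨hjQ, -, hint⟩ := hm'.mem_typeOf_iff.1 hj'
  have hmj : m ≤ j := not_lt.1 fun hjm =>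
    hj (hm.mem_typeOf_iff.2 ⟨hjQ, hjm, hm.bottom_lt j hjm, htt'.trans_lt hint.2⟩)
  exact hord.width_le hm.mem_Q hmj hjQ

theorem lt_of_mem_typeOf_of_top_le (hm : IsFirstAbove d pos t m)
    (hm' : IsFirstAbove d pos t' m') (hs : s ∈ TypeOf I d pos t')
    (htop : (pos s).2 + (I.r s).h ≤ t) : s < m := by
  obtain ⟨-, hsm', -, hst'⟩ := hm'.mem_typeOf_iff.1 hs
  refine not_le.1 fun hms => ?_
  linarith [hm'.bottom_lt m (hms.trans_lt hsm'), hm.lt_bottom]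

theorem lex_lt_of_top_le (hm : IsFirstAbove d pos t m) (hm' : IsFirstAbove d pos t' m')
    (hord : d.IsOrdered) (hBL : I.IsBL pos) (hr : IsLM I d pos t r) (hs : IsLM I d pos t' s)
    (htop : (pos s).2 + (I.r s).h ≤ t) :
    (pos r).1 < (pos s).1 ∨ (pos r).1 = (pos s).1 ∧ (pos s).2 < (pos r).2 := by
  have hsm := hm.lt_of_mem_typeOf_of_top_le hm' hs.1 htop
  have hsQ := (hm'.mem_typeOf_iff.1 hs.1).1
  have hwidth := hord.width_le hsQ hsm.le hm.mem_Q
  have hrint := (hm.mem_typeOf_iff.1 hr.1).2.2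
  rcases lt_or_ge (pos r).1 (pos s).1 with hlt | hsr
  · exact Or.inl hlt
  right
  have htall : I.totalWidth (d.tall t) ≤ (pos s).1 :=
    (d.totalWidth_tall_antitone (hm.bottom_lt s hsm).le).trans
      (hord.totalWidth_tall_le_left hBL (FQW.notMem_F_of_mem_Q hsQ))
  obtain ⟨j, hj, -, hjleft⟩ := hm.exists_mem_typeOf_meeting_window hord hBL htall
    (by linarith [hBL.right_le s])
  have hne : r ≠ s := by
    rintro rfl
    exact htop.not_gt hrint.2
  have hrs : (pos s).2 + (I.r s).h ≤ (pos r).2 :=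
    (hBL.top_le_bottom_or hne (by linarith [hr.2 j hj]) (by linarith [I.w_pos r])).resolve_left
      (by linarith [hrint.2, I.h_pos s])
  have hbottom : (pos s).2 < (pos r).2 := by linarith [I.h_pos s]
  refine ⟨hsr.antisymm' ?_, hbottom⟩
  rw [hm.left_eq_totalWidth_tall hord hBL hr, hm'.left_eq_totalWidth_tall hord hBL hs]
  exact d.totalWidth_tall_antitone hbottom.le

theorem half_le_occFrac_of_lt_bottom (hm : IsFirstAbove d pos t m)
    (hm' : IsFirstAbove d pos t' m') (hord : d.IsOrdered) (hBL : I.IsBL pos)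
    (hs : IsLM I d pos t' s) (hts : t < (pos s).2)
    (hcard : (TypeOf I d pos t').card ≤ (TypeOf I d pos t).card) : 1 / 2 ≤ I.occFrac pos t := by
  have hst' := (hm'.mem_typeOf_iff.1 hs.1).2.2.1
  have htype := hm.totalWidth_typeOf_le hm' hord (hts.trans hst').le hcard
  have htall : (pos s).1 ≤ I.totalWidth (d.tall t) :=
    (hm'.left_eq_totalWidth_tall hord hBL hs).trans_le (d.totalWidth_tall_antitone hts.le)
  refine le_trans ?_ (hm.totalWidth_add_div_le_occFrac hord hBL)
  rw [div_le_div_iff₀ two_pos I.W_pos]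
  linarith [hm'.width_le_left_add_two_mul hord hBL hs, hBL.left_nonneg s]

end IsFirstAbove

theorem exists_isLM (h : (TypeOf I d pos t).Nonempty) : ∃ r, IsLM I d pos t r :=
  Finset.exists_min_image _ (fun j => (pos j).1) h

theorem IsLMk.lt_bottom_of_not_intersects (hord : d.IsOrdered) (hBL : I.IsBL pos) (hi : i ∈ d.Q)
    {k : ℕ} (hs : IsLMk I d pos i k s) (ht : InLk I d pos i k t)
    (hnot : ¬ I.Intersects pos s t) : t < (pos s).2 := by
  obtain ⟨⟨t', ht', hst'⟩, hfirst⟩ := hs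
  obtain ⟨m, hm⟩ := ht.exists_isFirstAbove hord hBL hi
  obtain ⟨m', hm'⟩ := ht'.exists_isFirstAbove hord hBL hi
  have hcard : 0 < (TypeOf I d pos t).card := by
    rw [ht.2.2, ← ht'.2.2]
    exact Finset.card_pos.2 ⟨s, hst'.1⟩
  obtain ⟨r, hr⟩ := exists_isLM (Finset.card_pos.1 hcard)
  by_contra! hst
  have htop : (pos s).2 + (I.r s).h ≤ t :=
    not_lt.1 fun h => hnot ⟨hst.lt_of_ne (ht.1 s).1.symm, h⟩
  have hprecedes := hm.lex_lt_of_top_le hm' hord hBL hr hst' htop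
  have := hfirst r ⟨t, ht, hr⟩
  grind

end Lines

theorem Lk_line_occupation_general {n : ℕ} (I : SPInstance n) (d : FQW I)
    (hord : d.IsOrdered) (pos : Fin n → ℝ × ℝ) (hBL : I.IsBL pos) (i : Fin n) (hi : i ∈ d.Q)
    (k : ℕ) (iLMk : Fin n) (hLMk : IsLMk I d pos i k iLMk) :
    (∀ t : ℝ, InLk I d pos i k t → (k : ℝ) / (2 * (k : ℝ) + 1) ≤ I.occFrac pos t) ∧
    (∀ t : ℝ, InLk I d pos i k t → ¬ I.Intersects pos iLMk t → 1 / 2 ≤ I.occFrac pos t) := by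
  constructor
  · intro t ht
    obtain ⟨m, hm⟩ := ht.exists_isFirstAbove hord hBL hi
    rw [← ht.2.2]
    exact hm.card_div_le_occFrac hord hBL
  · intro t ht hnot
    have hlt := hLMk.lt_bottom_of_not_intersects hord hBL hi ht hnot
    obtain ⟨⟨t', ht', hs⟩, -⟩ := hLMk
    obtain ⟨m, hm⟩ := ht.exists_isFirstAbove hord hBL hi
    obtain ⟨m', hm'⟩ := ht'.exists_isFirstAbove hord hBL hi
    exact hm.half_le_occFrac_of_lt_bottom hm' hord hBL hs hlt (ht'.2.2.trans ht.2.2.symm).le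

theorem IsLeftRect.mem_Q {n : ℕ} {I : SPInstance n} {d : FQW I} {pos : Fin n → ℝ × ℝ}
    {iT iL : Fin n} (hiL : IsLeftRect I d pos iT iL) (hiT : iT ∈ d.Q) : iL ∈ d.Q :=
  hiL.elim (fun h => h.1) fun h => h.2 ▸ hiT

/-- **Corollary.** Every line of `L^k` that intersects `LM^k` is at least a
`k/(2k+1)` fraction occupied; every line of `L^k` that does not intersect
`LM^k` is at least half occupied. -/
theorem Lk_line_occupation {n : ℕ} (I : SPInstance n) (d : FQW I)
    (hord : d.IsOrdered) (pos : Fin n → ℝ × ℝ) (hBL : I.IsBL pos)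
    (hQ : d.Q.Nonempty) (iT iL : Fin n) (hiT : IsTopRect I d pos iT)
    (hiL : IsLeftRect I d pos iT iL)
    (k : ℕ) (hk : 1 ≤ k) (iLMk : Fin n) (hLMk : IsLMk I d pos iL k iLMk) :
    (∀ t : ℝ, InLk I d pos iL k t → I.Intersects pos iLMk t →
      (k : ℝ) / (2 * (k : ℝ) + 1) ≤ I.occFrac pos t) ∧
    (∀ t : ℝ, InLk I d pos iL k t → ¬ I.Intersects pos iLMk t →
      1 / 2 ≤ I.occFrac pos t) :=
  (Lk_line_occupation_general I d hord pos hBL iL (hiL.mem_Q hiT.1) k iLMk hLMk).imp_left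
    fun h t ht _ => h t ht
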